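/- In the abelian category Sh(G) of sheaves of ℚ-vector spaces on G = SU(2), one has Ext^0_{Sh(G)}(K, K) ≅ ℚ and Ext^n_{Sh(G)}(K, K) = 0 for all n ≠ 0. -/

import Mathlib

open CategoryTheory TopologicalSpace Limits

noncomputable section

/-- The special unitary group `SU(2)`, as the kernel of the determinant on the unitary group
of 2×2 complex matrices. -/
abbrev SU2 : Subgroup (Matrix.unitaryGroup (Fin 2) ℂ) :=
  MonoidHom.ker (Matrix.detMonoidHom.comp (Matrix.unitaryGroup (Fin 2) ℂ).subtype)

/-- `SU(2)` as a topological space. -/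
abbrev GTop : TopCat := TopCat.of SU2

/-- The category of sheaves of `ℚ`-vector spaces on `SU(2)`. -/
abbrev ShG : Type _ := Sheaf (Opens.grothendieckTopology GTop) (ModuleCat.{0} ℚ)

attribute [local instance] Classical.propDecidable

/-- The constant sheaf `ℚ_G` on `SU(2)`. -/
def QG : ShG :=
  (constantSheaf (Opens.grothendieckTopology GTop) (ModuleCat.{0} ℚ)).obj (ModuleCat.of ℚ ℚ)

/-- The skyscraper sheaf `i_* ℚ` at the identity element of `SU(2)`. -/
def skyQ : ShG := skyscraperSheaf (X := GTop) (1 : SU2) (ModuleCat.of ℚ ℚ)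

/-- The unit `ℚ_G ⟶ i_* i^* ℚ_G` of the stalk/skyscraper adjunction at the identity. -/
def unitQG := (stalkSkyscraperSheafAdjunction (C := ModuleCat.{0} ℚ) (X := GTop)
  (1 : SU2)).unit.app QG

/-- `K` is the kernel of the unit `ℚ_G ⟶ i_* i^* ℚ_G`; equivalently, the extension by zero
of the constant sheaf `ℚ` on `SU(2) ∖ {1}`. -/
def KK : ShG := kernel unitQG

instance : HasDerivedCategory ShG := HasDerivedCategory.standard _
instance : HasExt.{1} ShG := hasExt_of_hasDerivedCategory _

/-!
The sheaf `K` is the extension by zero `j_! ℚ_U` for `U = SU(2) ∖ {1}`, so `Hom(K, F) = F(U)`, and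
`U` is homeomorphic to `ℝ³` by stereographic projection. Call a sheaf `F` box-flasque if its
sections over nonempty boxes of `ℝ³` extend to larger boxes; `K` is so because boxes are connected.

If `0 → F → G → H → 0` is exact with `F` box-flasque, then `G(U) → H(U)` is surjective. Local lifts
of a section of `H` are glued over a compact box by repeated bisection, the discrepancy of two lifts
on an overlap being a section of `F` over a box, which extends; the lifts over an exhaustion of `U`
by boxes are corrected in the same way to be compatible. If `G` is moreover injective, then `H` is
again box-flasque, so dimension shifting within the class of box-flasque sheaves gives
`Ext^n(K, F) = 0` for `n > 0`.
-/

open Opposite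

universe u w

/-- Sheaves of `k`-modules on the space `X`. -/
abbrev ModuleSheaf (k : Type u) [Ring k] (X : TopCat.{u}) : Type _ :=
  Sheaf (Opens.grothendieckTopology X) (ModuleCat.{u} k)

namespace ModuleSheaf

variable {k : Type u} [Ring k] {X : TopCat.{u}} {F G H : ModuleSheaf k X}
  {S : ShortComplex (ModuleSheaf k X)} {U V W Z A B : Opens X}

/-- The module of sections of `F` over `V`. -/
abbrev Sections (F : ModuleSheaf k X) (V : Opens X) : Type u := F.obj.obj (op V)

/-- Restriction of sections, as a linear map. -/
def res (F : ModuleSheaf k X) (h : W ≤ V) : F.Sections V →ₗ[k] F.Sections W :=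
  (F.obj.map (homOfLE h).op).hom

/-- The linear map on sections over `V` induced by a morphism of sheaves. -/
def mapSections (φ : F ⟶ G) (V : Opens X) : F.Sections V →ₗ[k] G.Sections V :=
  (φ.hom.app (op V)).hom

@[simp]
lemma res_res (F : ModuleSheaf k X) (h : W ≤ V) (h' : Z ≤ W) (s : F.Sections V) :
    F.res h' (F.res h s) = F.res (h'.trans h) s := by
  simp only [res, ← LinearMap.comp_apply, ← ModuleCat.hom_comp, ← F.obj.map_comp]
  rfl

@[simp]
lemma res_self (F : ModuleSheaf k X) (s : F.Sections V) : F.res le_rfl s = s :=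
  congr($(F.obj.map_id (op V)) s)

lemma mapSections_res (φ : F ⟶ G) (h : W ≤ V) (s : F.Sections V) :
    mapSections φ W (F.res h s) = G.res h (mapSections φ V s) :=
  congr($(φ.hom.naturality (homOfLE h).op) s)

lemma mapSections_comp (φ : F ⟶ G) (γ : G ⟶ H) (s : F.Sections V) :
    mapSections (φ ≫ γ) V s = mapSections γ V (mapSections φ V s) := rfl

lemma exists_glue (F : ModuleSheaf k X) {ι : Type*} {B : ι → Opens X} (hB : ∀ i, B i ≤ V)
    (hV : V ≤ iSup B) (s : ∀ i, F.Sections (B i))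
    (hs : ∀ i j, F.res inf_le_left (s i) = F.res (inf_le_right : B i ⊓ B j ≤ B j) (s j)) :
    ∃ t : F.Sections V, ∀ i, F.res (hB i) t = s i :=
  (TopCat.Sheaf.existsUnique_gluing' (C := ModuleCat.{u} k) (X := X) F B V
    (fun i => homOfLE (hB i)) hV s hs).exists

lemma eq_of_res_eq {s t : F.Sections V}
    (h : ∀ x ∈ V, ∃ (W : Opens X) (hW : W ≤ V), x ∈ W ∧ F.res hW s = F.res hW t) : s = t := by
  choose! W hWV hxW hst using h
  refine TopCat.Sheaf.eq_of_locally_eq' (C := ModuleCat.{u} k) (X := X) F (fun x : V => W x) V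
    (fun x => homOfLE (hWV x x.2)) (fun x hx => ?_) s t (fun x => hst x x.2)
  exact Opens.mem_iSup.2 ⟨⟨x, hx⟩, hxW x hx⟩

lemma exists_glue_sup (F : ModuleSheaf k X) (a : F.Sections A) (b : F.Sections B)
    (h : F.res inf_le_left a = F.res (inf_le_right : A ⊓ B ≤ B) b) :
    ∃ s : F.Sections (A ⊔ B), F.res le_sup_left s = a ∧ F.res le_sup_right s = b := by
  obtain ⟨s, hs⟩ := F.exists_glue (V := A ⊔ B) (B := fun i : Bool => bif i then A else B)
    (Bool.forall_bool.2 ⟨le_sup_right, le_sup_left⟩) (sup_eq_iSup A B).le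
    (Bool.rec b a) (by
      rintro (_ | _) (_ | _)
      · rfl
      · simpa using (congrArg (F.res (inf_comm B A).le) h).symm
      · exact h
      · rfl)
  exact ⟨s, hs true, hs false⟩

lemma mapSections_injective (φ : F ⟶ G) [Mono φ] (V : Opens X) :
    Function.Injective (mapSections φ V) := by
  have : Mono (φ.hom.app (op V)) := inferInstanceAs
    (Mono ((sheafToPresheaf _ _ ⋙ (evaluation _ _).obj (op V)).map φ))
  exact (ModuleCat.mono_iff_injective _).1 this

lemma exists_mapSections_eq_of_exact (hS : S.Exact) [Mono S.f] (s : S.X₂.Sections V)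
    (hs : mapSections S.g V s = 0) : ∃ t, mapSections S.f V t = s := by
  let Γ : ModuleSheaf k X ⥤ ModuleCat.{u} k :=
    sheafToPresheaf _ _ ⋙ (evaluation _ _).obj (op V)
  have : Γ.Additive := by dsimp only [Γ]; infer_instance
  have : PreservesFiniteLimits Γ := by dsimp only [Γ]; infer_instance
  exact (S.map Γ).moduleCat_exact_iff.1 (hS.map_of_mono_of_preservesKernel Γ ‹_› inferInstance) s hs

lemma exists_local_preimage (φ : F ⟶ G) [Epi φ] (s : G.Sections V) {x : X} (hx : x ∈ V) :
    ∃ (W : Opens X) (hW : W ≤ V) (t : F.Sections W), x ∈ W ∧ mapSections φ W t = G.res hW s := by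
  have hφ : TopCat.Presheaf.IsLocallySurjective φ.hom :=
    (TopCat.Sheaf.isLocallySurjective_iff_epi (X := X) (C := ModuleCat.{u} k) φ).2 ‹_›
  obtain ⟨W, hW, ⟨t, ht⟩, hxW⟩ := (TopCat.Presheaf.isLocallySurjective_iff φ.hom).1 hφ V s x hx
  exact ⟨W, hW, t, hxW, ht⟩

/-- The section `q` of `G` over `V` lifts along `g` over the open subset `W ≤ V`. -/
def HasLift (g : F ⟶ G) (q : G.Sections V) (W : Opens X) : Prop :=
  ∃ (h : W ≤ V) (t : F.Sections W), mapSections g W t = G.res h q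

lemma HasLift.le {g : F ⟶ G} {q : G.Sections V} (h : HasLift g q W) : W ≤ V := h.choose

lemma HasLift.mono {g : F ⟶ G} {q : G.Sections V} (h : HasLift g q W) (hZ : Z ≤ W) :
    HasLift g q Z := by
  obtain ⟨hW, t, ht⟩ := h
  exact ⟨hZ.trans hW, F.res hZ t, by rw [mapSections_res, ht, res_res]⟩

lemma exists_hasLift (g : F ⟶ G) [Epi g] (q : G.Sections V) {x : X} (hx : x ∈ V) :
    ∃ W, x ∈ W ∧ HasLift g q W := by
  obtain ⟨W, hW, t, hxW, ht⟩ := exists_local_preimage g q hx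
  exact ⟨W, hxW, hW, t, ht⟩

/-- Two lifts differ by a section of the kernel `S.X₁`; correcting the lift over `B` by an
extension of this difference makes it agree with the lift over `A`. -/
lemma HasLift.exists_lift_res_eq (hS : S.ShortExact) {q : S.X₃.Sections V} {hA : A ≤ V}
    {t : S.X₂.Sections A} (ht : mapSections S.g A t = S.X₃.res hA q) (hB : HasLift S.g q B)
    (hWA : W ≤ A) (hWB : W ≤ B) (hsurj : Function.Surjective (S.X₁.res hWB)) :
    ∃ w : S.X₂.Sections B, mapSections S.g B w = S.X₃.res hB.le q ∧
      S.X₂.res hWB w = S.X₂.res hWA t := by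
  have := hS.mono_f
  have ⟨_, u, hu⟩ := hB
  obtain ⟨d, hd⟩ := exists_mapSections_eq_of_exact hS.exact (S.X₂.res hWA t - S.X₂.res hWB u) (by
    rw [map_sub, mapSections_res, mapSections_res, ht, hu, res_res, res_res, sub_self])
  obtain ⟨e, rfl⟩ := hsurj d
  refine ⟨u + mapSections S.f B e, ?_, ?_⟩
  · rw [map_add, hu, ← mapSections_comp, S.zero]
    exact add_zero _
  · rw [map_add, ← mapSections_res, hd, add_sub_cancel]

lemma HasLift.sup (hS : S.ShortExact) {q : S.X₃.Sections V} (hA : HasLift S.g q A)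
    (hB : HasLift S.g q B)
    (hsurj : Function.Surjective (S.X₁.res (inf_le_right : A ⊓ B ≤ B))) :
    HasLift S.g q (A ⊔ B) := by
  obtain ⟨hAV, t, ht⟩ := hA
  obtain ⟨w, hw, hwt⟩ := hB.exists_lift_res_eq hS ht inf_le_left inf_le_right hsurj
  obtain ⟨s, hsA, hsB⟩ := S.X₂.exists_glue_sup t w hwt.symm
  refine ⟨sup_le hAV hB.le, s, eq_of_res_eq fun x hx => ?_⟩
  rcases hx with hx | hx
  · exact ⟨A, le_sup_left, hx, by rw [← mapSections_res, hsA, ht, res_res]⟩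
  · exact ⟨B, le_sup_right, hx, by rw [← mapSections_res, hsB, hw, res_res]⟩

lemma exists_mapSections_eq_of_exhaustion (hS : S.ShortExact) {B : ℕ → Opens X}
    (hB : ∀ n, B n ≤ B (n + 1)) (hV : V = iSup B)
    (hsurj : ∀ n, Function.Surjective (S.X₁.res (hB n))) (q : S.X₃.Sections V)
    (hq : ∀ n, HasLift S.g q (B n)) : ∃ w : S.X₂.Sections V, mapSections S.g V w = q := by
  have hBV : ∀ n, B n ≤ V := fun n => hV ▸ le_iSup B n
  let Lift (n : ℕ) := {t : S.X₂.Sections (B n) // mapSections S.g (B n) t = S.X₃.res (hBV n) q}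
  have extend : ∀ n (t : Lift n), ∃ w : Lift (n + 1), S.X₂.res (hB n) w.1 = t.1 := by
    rintro n ⟨t, ht⟩
    obtain ⟨w, hw, hwt⟩ := (hq (n + 1)).exists_lift_res_eq hS ht le_rfl (hB n) (hsurj n)
    exact ⟨⟨w, hw⟩, hwt.trans (S.X₂.res_self t)⟩
  choose next hnext using extend
  obtain ⟨_, t₀, ht₀⟩ := hq 0
  let t (n : ℕ) : Lift n := Nat.rec ⟨t₀, ht₀⟩ next n
  have hmono : Monotone B := monotone_nat_of_le_succ hB
  have hcompat : ∀ {m n} (hmn : m ≤ n), S.X₂.res (hmono hmn) (t n).1 = (t m).1 := by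
    intro m n hmn
    induction n, hmn using Nat.le_induction with
    | base => exact res_self _ _
    | succ n hmn ih => rw [← ih, ← hnext n (t n), res_res]
  obtain ⟨w, hw⟩ := S.X₂.exists_glue hBV hV.le (fun n => (t n).1) (fun m n => by
    rcases le_total m n with hmn | hmn
    · rw [← hcompat hmn, res_res]
    · rw [← hcompat hmn, res_res])
  refine ⟨w, eq_of_res_eq fun x hx => ?_⟩
  obtain ⟨n, hn⟩ := Opens.mem_iSup.1 (hV ▸ hx)
  exact ⟨B n, hBV n, hn, by rw [← mapSections_res, hw, (t n).2]⟩

end ModuleSheaf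

/-- The free presheaf of `k`-modules on the open set `U`: it is `k` on the open subsets of `U` and
zero elsewhere, so that its sheafification is the extension by zero of the constant sheaf on `U`. -/
abbrev freePresheaf (k : Type u) [Ring k] {X : TopCat.{u}} (U : Opens X) :
    (Opens X)ᵒᵖ ⥤ ModuleCat.{u} k :=
  yoneda.obj U ⋙ ModuleCat.free k

namespace freePresheaf

variable {k : Type u} [Ring k] {X : TopCat.{u}} {U V W : Opens X}
  {P Q : (Opens X)ᵒᵖ ⥤ ModuleCat.{u} k}

/-- The generator of `freePresheaf k U` over an open subset of `U`. -/
def gen (h : V ≤ U) : (freePresheaf k U).obj (op V) := ModuleCat.freeMk (homOfLE h)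

/-- The Yoneda lemma for free presheaves of modules. -/
def homEquiv : (freePresheaf k U ⟶ P) ≃ P.obj (op U) :=
  (((ModuleCat.adj k).whiskerRight (Opens X)ᵒᵖ).homEquiv (yoneda.obj U) P).trans yonedaEquiv

lemma homEquiv_apply (φ : freePresheaf k U ⟶ P) : homEquiv φ = φ.app (op U) (gen le_rfl) := rfl

lemma homEquiv_comp (φ : freePresheaf k U ⟶ P) (f : P ⟶ Q) :
    homEquiv (φ ≫ f) = f.app (op U) (homEquiv φ) := rfl

lemma homEquiv_symm_comp (s : P.obj (op U)) (f : P ⟶ Q) :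
    homEquiv.symm s ≫ f = homEquiv.symm (f.app (op U) s) := by
  rw [Equiv.eq_symm_apply, homEquiv_comp, Equiv.apply_symm_apply]

lemma map_gen (h : V ≤ U) (hW : W ≤ V) :
    (freePresheaf k U).map (homOfLE hW).op (gen h) = gen (hW.trans h) :=
  ModuleCat.free_map_apply _ _

lemma app_gen (φ : freePresheaf k U ⟶ P) (h : V ≤ U) :
    φ.app (op V) (gen h) = P.map (homOfLE h).op (homEquiv φ) := by
  rw [homEquiv_apply, ← map_gen le_rfl h]
  exact congr($(φ.naturality (homOfLE h).op) (gen le_rfl))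

lemma exists_eq_smul_gen (h : V ≤ U) (p : (freePresheaf k U).obj (op V)) :
    ∃ c : k, p = c • gen h := by
  refine ⟨(show (V ⟶ U) →₀ k from p) (homOfLE h), ?_⟩
  refine Finsupp.ext (M := k) (α := V ⟶ U) fun f => ?_
  obtain rfl : homOfLE h = f := Subsingleton.elim _ _
  exact ((congrArg _ Finsupp.single_eq_same).trans (mul_one _)).symm

lemma eq_zero_of_not_le (h : ¬ V ≤ U) (p : (freePresheaf k U).obj (op V)) : p = 0 :=
  Finsupp.ext (M := k) fun f => (h (leOfHom f)).elim

lemma eq_zero_of_app_eq_zero (φ : freePresheaf k U ⟶ P)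
    (hφ : ∀ (h : V ≤ U) (c : k), c • P.map (homOfLE h).op (homEquiv φ) = 0 → c = 0)
    {p : (freePresheaf k U).obj (op V)} (hp : φ.app (op V) p = 0) : p = 0 := by
  by_cases h : V ≤ U
  · obtain ⟨c, rfl⟩ := exists_eq_smul_gen h p
    rw [map_smul, app_gen] at hp
    rw [hφ h c hp, zero_smul]
  · exact eq_zero_of_not_le h p

lemma eq_zero_of_smul_gen_eq_zero (h : V ≤ U) {c : k} (hc : c • gen (k := k) h = 0) : c = 0 := by
  have : c * Finsupp.single (homOfLE h) (1 : k) (homOfLE h) = 0 :=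
    congr((show (V ⟶ U) →₀ k from $hc) (homOfLE h))
  rwa [Finsupp.single_eq_same, mul_one] at this

instance mono_whiskerRight_yoneda (f : U ⟶ V) :
    Mono (Functor.whiskerRight (yoneda.map f) (ModuleCat.free k)) := by
  have : ∀ W, Mono ((Functor.whiskerRight (yoneda.map f) (ModuleCat.free k)).app W) := fun W => by
    refine (ModuleCat.mono_iff_injective _).2 (Finsupp.mapDomain_injective fun a b _ => ?_)
    exact Subsingleton.elim (α := W.unop ⟶ U) a b
  exact NatTrans.mono_of_mono_app _

end freePresheaf

namespace ModuleSheaf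

variable {k : Type u} [Ring k] {X : TopCat.{u}} {I : ModuleSheaf k X} {U V : Opens X}

lemma res_surjective_of_injective [Injective I] (h : U ≤ V) : Function.Surjective (I.res h) := by
  intro s
  have : Injective I.obj :=
    Injective.injective_of_adjoint (sheafificationAdjunction _ (ModuleCat.{u} k)) I
  let m : freePresheaf k U ⟶ freePresheaf k V :=
    Functor.whiskerRight (yoneda.map (homOfLE h)) (ModuleCat.free k)
  let e : freePresheaf k V ⟶ I.obj := Injective.factorThru (freePresheaf.homEquiv.symm s) m
  have hm : freePresheaf.homEquiv m = freePresheaf.gen h := ModuleCat.free_map_apply _ _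
  refine ⟨freePresheaf.homEquiv e, ?_⟩
  calc I.res h (freePresheaf.homEquiv e)
    _ = e.app (op U) (freePresheaf.gen h) := (freePresheaf.app_gen e h).symm
    _ = freePresheaf.homEquiv (m ≫ e) := by rw [freePresheaf.homEquiv_comp, hm]
    _ = s := by rw [Injective.comp_factorThru, Equiv.apply_symm_apply]

end ModuleSheaf

section BoxInduction

open Function Set

variable {ι : Type*} {P : (ι → ℝ) → (ι → ℝ) → Prop} {A B : ι → ℝ}

lemma sum_update_sub [Fintype ι] (f : ι → ℝ) (i : ι) (t : ℝ) :
    ∑ j, update f i t j = ∑ j, f j + (t - f i) := by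
  rw [Finset.sum_update_of_mem (Finset.mem_univ i), ← Finset.add_sum_erase _ f (Finset.mem_univ i),
    Finset.erase_eq]
  ring

/-- Bisecting the coordinates of length at least `δ` into overlapping pieces reaches boxes of side
less than `δ`, as each piece has its total side length decreased by at least `δ / 3`. -/
lemma box_induction_of_small [Finite ι] {δ : ℝ} (hδ : 0 < δ)
    (small : ∀ a b, A ≤ a → b ≤ B → (∀ i, a i < b i) → (∀ i, b i - a i < δ) → P a b)
    (glue : ∀ a b i s t, (∀ j, a j < b j) → a i < s → s < t → t < b i →
      P a (update b i t) → P (update a i s) b → P a b)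
    (hAB : ∀ i, A i < B i) : P A B := by
  cases nonempty_fintype ι
  have key (n : ℕ) : ∀ a b, A ≤ a → b ≤ B → (∀ i, a i < b i) →
      ∑ i, b i - ∑ i, a i < n * (δ / 3) → P a b := by
    induction n with
    | zero =>
      intro a b _ _ hab hn
      linarith [Finset.sum_le_sum fun i (_ : i ∈ Finset.univ) => (hab i).le]
    | succ n ih =>
      intro a b hA hB hab hn
      by_cases hlt : ∀ i, b i - a i < δ
      · exact small a b hA hB hab hlt
      obtain ⟨i, hi⟩ := not_forall.1 hlt
      push Not at hi
      push_cast at hn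
      refine glue a b i (a i + δ / 3) (b i - δ / 3) hab (by linarith) (by linarith) (by linarith)
        (ih _ _ hA (update_le_iff.2 ⟨?_, fun j _ => hB j⟩)
          ((forall_update_iff b fun j y => a j < y).2 ⟨?_, fun j _ => hab j⟩) ?_)
        (ih _ _ (le_update_iff.2 ⟨?_, fun j _ => hA j⟩) hB
          ((forall_update_iff a fun j y => y < b j).2 ⟨?_, fun j _ => hab j⟩) ?_)
      · linarith [hB i]
      · linarith
      · rw [sum_update_sub]; linarith
      · linarith [hA i]
      · linarith
      · rw [sum_update_sub]; linarith
  obtain ⟨n, hn⟩ := exists_nat_gt ((∑ i, B i - ∑ i, A i) / (δ / 3))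
  exact key n A B le_rfl le_rfl hAB ((div_lt_iff₀ (by positivity)).1 hn)

lemma box_induction [Finite ι]
    (loc : ∀ x ∈ Icc A B, ∃ O, IsOpen O ∧ x ∈ O ∧ ∀ a b, Icc a b ⊆ O → P a b)
    (glue : ∀ a b i s t, (∀ j, a j < b j) → a i < s → s < t → t < b i →
      P a (update b i t) → P (update a i s) b → P a b)
    (hAB : ∀ i, A i < B i) : P A B := by
  cases nonempty_fintype ι
  obtain ⟨δ, hδ, hball⟩ := lebesgue_number_lemma_of_metric_sUnion (isCompact_Icc (a := A) (b := B))
    (c := {O | IsOpen O ∧ ∀ a b, Icc a b ⊆ O → P a b}) (fun O hO => hO.1)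
    (fun x hx => let ⟨O, hO, hxO, hP⟩ := loc x hx; ⟨O, ⟨hO, hP⟩, hxO⟩)
  refine box_induction_of_small hδ (fun a b hA hB hab hlt => ?_) glue hAB
  obtain ⟨O, ⟨-, hP⟩, hO⟩ := hball a ⟨hA, fun i => (hab i).le.trans (hB i)⟩
  refine hP a b (Subset.trans (fun x hx => ?_) hO)
  rw [Metric.mem_ball, dist_pi_lt_iff hδ]
  intro i
  rw [Real.dist_eq, abs_of_nonneg (sub_nonneg.2 (hx.1 i))]
  linarith [hx.2 i, hlt i]

end BoxInduction

section Box

open Function Set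

variable {X : Type*} [TopologicalSpace X] {ι : Type*} [Finite ι] {ψ : (ι → ℝ) → X}
  (hψ : Topology.IsOpenEmbedding ψ) {a b c d : ι → ℝ}

/-- The image of the open box `∏ i, (a i, b i)` under the chart `ψ`. -/
def box (a b : ι → ℝ) : Opens X :=
  ⟨ψ '' univ.pi fun i => Ioo (a i) (b i),
    hψ.isOpenMap _ (isOpen_set_pi finite_univ fun _ _ => isOpen_Ioo)⟩

variable {hψ}

lemma mem_box {x : ι → ℝ} : ψ x ∈ box hψ a b ↔ ∀ i, x i ∈ Ioo (a i) (b i) :=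
  hψ.injective.mem_set_image.trans mem_univ_pi

lemma box_le_iff {V : Opens X} :
    box hψ a b ≤ V ↔ ∀ x : ι → ℝ, (∀ i, x i ∈ Ioo (a i) (b i)) → ψ x ∈ V :=
  image_subset_iff.trans (forall_congr' fun _ => imp_congr_left mem_univ_pi)

lemma box_mono (ha : c ≤ a) (hb : b ≤ d) : box hψ a b ≤ box hψ c d :=
  box_le_iff.2 fun _ hx => mem_box.2 fun i => Ioo_subset_Ioo (ha i) (hb i) (hx i)

lemma box_inf_box : box hψ a b ⊓ box hψ c d = box hψ (a ⊔ c) (b ⊓ d) := by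
  ext1
  simp only [box, Opens.coe_inf, Opens.coe_mk, ← image_inter hψ.injective, ← pi_inter_distrib,
    Ioo_inter_Ioo, Pi.sup_apply, Pi.inf_apply]

lemma box_le_sup_box_update {i : ι} {s t : ℝ} (hst : s < t) :
    box hψ a b ≤ box hψ a (update b i t) ⊔ box hψ (update a i s) b := by
  refine box_le_iff.2 fun x hx => ?_
  rcases lt_or_ge (x i) t with hxt | hxt
  · exact Or.inl (mem_box.2
      ((forall_update_iff b fun j y => x j ∈ Ioo (a j) y).2 ⟨⟨(hx i).1, hxt⟩, fun j _ => hx j⟩))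
  · exact Or.inr (mem_box.2
      ((forall_update_iff a fun j y => x j ∈ Ioo y (b j)).2
        ⟨⟨hst.trans_le hxt, (hx i).2⟩, fun j _ => hx j⟩))

lemma isPreconnected_box : IsPreconnected (box hψ a b : Set X) :=
  (isPreconnected_univ_pi fun _ => isPreconnected_Ioo).image ψ hψ.continuous.continuousOn

end Box

namespace ModuleSheaf

variable {k : Type u} [Ring k] {X : TopCat.{u}} {ι : Type*} [Finite ι] {ψ : (ι → ℝ) → X}
  {hψ : Topology.IsOpenEmbedding ψ} {S : ShortComplex (ModuleSheaf k X)} {V : Opens X}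
  {a b : ι → ℝ}

/-- A sheaf is box-flasque for the chart `ψ` if its sections over nonempty boxes extend to every
larger box. This weakening of flasqueness is also satisfied by the extension by zero of a constant
sheaf from the image of `ψ`. -/
def IsBoxFlasque (hψ : Topology.IsOpenEmbedding ψ) (F : ModuleSheaf k X) : Prop :=
  ∀ ⦃a b c d : ι → ℝ⦄, (∀ i, a i < b i) → ∀ h : box hψ a b ≤ box hψ c d,
    Function.Surjective (F.res h)

lemma IsBoxFlasque.hasLift_of_update (hS : S.ShortExact) (hF : S.X₁.IsBoxFlasque hψ)
    {q : S.X₃.Sections V} {i : ι} {s t : ℝ} (hab : ∀ j, a j < b j) (has : a i < s) (hst : s < t)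
    (htb : t < b i) (hleft : HasLift S.g q (box hψ a (Function.update b i t)))
    (hright : HasLift S.g q (box hψ (Function.update a i s) b)) : HasLift S.g q (box hψ a b) := by
  have hlt : ∀ j, Function.update a i s j < Function.update b i t j := fun j => by
    obtain rfl | hj := eq_or_ne j i
    · simpa only [Function.update_self]
    · simpa only [Function.update_of_ne hj] using hab j
  have hsurj := hF (c := Function.update a i s) (d := b) hlt
  have hinf : box hψ (Function.update a i s) (Function.update b i t) =
      box hψ a (Function.update b i t) ⊓ box hψ (Function.update a i s) b := by
    rw [box_inf_box, sup_eq_right.2 (le_update_self_iff.2 has.le),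
      inf_eq_left.2 (update_le_self_iff.2 htb.le)]
  rw [hinf] at hsurj
  exact (hleft.sup hS hright (hsurj inf_le_right)).mono (box_le_sup_box_update hst)

lemma IsBoxFlasque.hasLift_box (hS : S.ShortExact) (hF : S.X₁.IsBoxFlasque hψ)
    (q : S.X₃.Sections V) (hab : ∀ i, a i < b i) (hV : ∀ x ∈ Set.Icc a b, ψ x ∈ V) :
    HasLift S.g q (box hψ a b) := by
  have := hS.epi_g
  refine box_induction (P := fun a b => HasLift S.g q (box hψ a b)) (fun x hx => ?_)
    (fun a b i s t hab has hst htb => hF.hasLift_of_update hS hab has hst htb) hab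
  obtain ⟨W, hxW, hW⟩ := exists_hasLift S.g q (hV x hx)
  exact ⟨ψ ⁻¹' W, W.isOpen.preimage hψ.continuous, hxW, fun c d hcd =>
    hW.mono (box_le_iff.2 fun y hy => hcd ⟨fun i => (hy i).1.le, fun i => (hy i).2.le⟩)⟩

lemma IsBoxFlasque.mapSections_surjective_of_exhaustion (hS : S.ShortExact)
    (hF : S.X₁.IsBoxFlasque hψ) {α β : ℕ → ι → ℝ} (hα : Antitone α) (hβ : Monotone β)
    (hαβ : ∀ n i, α n i < β n i) (hIcc : ∀ n, ∀ x ∈ Set.Icc (α n) (β n), ψ x ∈ V)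
    (hV : ∀ y ∈ V, ∃ n, y ∈ box hψ (α n) (β n)) :
    Function.Surjective (mapSections S.g V) := fun q =>
  have hle n : box hψ (α n) (β n) ≤ V :=
    box_le_iff.2 fun x hx => hIcc n x ⟨fun i => (hx i).1.le, fun i => (hx i).2.le⟩
  exists_mapSections_eq_of_exhaustion hS
    (fun n => box_mono (hα n.le_succ) (hβ n.le_succ))
    (le_antisymm (fun y hy => Opens.mem_iSup.2 (hV y hy)) (iSup_le hle))
    (fun n => hF (hαβ n) _) q (fun n => hF.hasLift_box hS q (hαβ n) (hIcc n))

lemma IsBoxFlasque.mapSections_surjective_box (hS : S.ShortExact) (hF : S.X₁.IsBoxFlasque hψ)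
    (hab : ∀ i, a i < b i) : Function.Surjective (mapSections S.g (box hψ a b)) := by
  choose α β hα hβ hαmem hβmem hαβ hαlim hβlim using
    fun i => exists_seq_strictAnti_strictMono_tendsto (hab i)
  refine hF.mapSections_surjective_of_exhaustion hS (α := fun n i => α i n) (β := fun n i => β i n)
    (fun m n hmn i => (hα i).antitone hmn) (fun m n hmn i => (hβ i).monotone hmn)
    (fun n i => hαβ i n n) (fun n x hx => mem_box.2 fun i =>
      ⟨(hαmem i n).1.trans_le (hx.1 i), (hx.2 i).trans_lt (hβmem i n).2⟩) ?_
  rintro _ ⟨x, hx, rfl⟩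
  have hlim : ∀ᶠ n in Filter.atTop, ∀ i, x i ∈ Set.Ioo (α i n) (β i n) := by
    refine Filter.eventually_all.2 fun i => ?_
    have hxi := Set.mem_univ_pi.1 hx i
    exact ((hαlim i).eventually_lt_const hxi.1).and ((hβlim i).eventually_const_lt hxi.2)
  obtain ⟨n, hn⟩ := hlim.exists
  exact ⟨n, mem_box.2 hn⟩

lemma IsBoxFlasque.mapSections_surjective_range (hS : S.ShortExact) (hF : S.X₁.IsBoxFlasque hψ)
    (hV : (V : Set X) = Set.range ψ) : Function.Surjective (mapSections S.g V) := by
  cases nonempty_fintype ι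
  have hψV x : ψ x ∈ (V : Set X) := hV ▸ Set.mem_range_self x
  have hmono : Monotone fun (n : ℕ) (_ : ι) => (n + 1 : ℝ) := fun m n hmn _ => by
    simpa using hmn
  refine hF.mapSections_surjective_of_exhaustion hS (α := -fun (n : ℕ) _ => (n + 1 : ℝ))
    hmono.neg hmono (fun n i => ?_) (fun n x _ => hψV x) (fun y hy => ?_)
  · exact neg_lt_self (by positivity : (0 : ℝ) < n + 1)
  · obtain ⟨x, rfl⟩ : y ∈ Set.range ψ := hV ▸ hy
    obtain ⟨n, hn⟩ := exists_nat_gt ‖x‖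
    exact ⟨n, mem_box.2 fun i => abs_lt.1 <|
      (norm_le_pi_norm x i).trans_lt (hn.trans (lt_add_one _))⟩

lemma IsBoxFlasque.of_shortExact (hS : S.ShortExact) (hF : S.X₁.IsBoxFlasque hψ)
    [Injective S.X₂] : S.X₃.IsBoxFlasque hψ := by
  intro a b c d hab h s
  obtain ⟨t, rfl⟩ := hF.mapSections_surjective_box hS hab s
  obtain ⟨t, rfl⟩ := res_surjective_of_injective h t
  exact ⟨mapSections S.g _ t, (mapSections_res _ _ _).symm⟩

end ModuleSheaf

namespace ModuleSheaf

variable {k : Type u} [Ring k] {X : TopCat.{u}} {K F : ModuleSheaf k X} {U V : Opens X}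
  {e : K.Sections U}

/-- The section `e` over `U` exhibits `K` as the extension by zero `j_! k_U` of the constant sheaf
on `U`, with `e` corresponding to `1`: the induced morphism from `freePresheaf k U` becomes an
isomorphism after sheafification. -/
def IsExtensionByZero (e : K.Sections U) : Prop :=
  (Opens.grothendieckTopology X).W (freePresheaf.homEquiv.symm e)

namespace IsExtensionByZero

lemma app_smul_gen (e : K.Sections U) (h : V ≤ U) (c : k) :
    (freePresheaf.homEquiv.symm e).app (op V) (c • freePresheaf.gen h) = c • K.res h e := by
  rw [map_smul, freePresheaf.app_gen, Equiv.apply_symm_apply]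
  rfl

lemma mapSections_bijective (he : IsExtensionByZero e) (F : ModuleSheaf k X) :
    Function.Bijective fun φ : K ⟶ F => mapSections φ U e := by
  have heq : (fun φ : K ⟶ F => mapSections φ U e) = freePresheaf.homEquiv ∘
      (fun φ : K.obj ⟶ F.obj => freePresheaf.homEquiv.symm e ≫ φ) ∘
      (sheafToPresheaf _ _).map := by
    funext φ
    exact ((freePresheaf.homEquiv_comp _ _).trans
      (congrArg _ (Equiv.apply_symm_apply _ _))).symm
  rw [heq]
  exact freePresheaf.homEquiv.bijective.comp
    ((he F.obj F.property).comp <|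
      (fullyFaithfulSheafToPresheaf _ _).map_bijective K F)

lemma eq_zero_of_smul_res_eq_zero (he : IsExtensionByZero e) (h : V ≤ U)
    (hV : (V : Set X).Nonempty) {c : k} (hc : c • K.res h e = 0) : c = 0 := by
  obtain ⟨x, hx⟩ := hV
  have := GrothendieckTopology.W.isLocallyInjective he
  rw [← app_smul_gen] at hc
  obtain ⟨W, f, hW, -⟩ := Presheaf.equalizerSieve_mem (Opens.grothendieckTopology X)
    (freePresheaf.homEquiv.symm e) (c • freePresheaf.gen h) 0 (hc.trans (map_zero _).symm) x hx
  refine freePresheaf.eq_zero_of_smul_gen_eq_zero ((leOfHom f).trans h) (c := c) ?_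
  rw [← freePresheaf.map_gen h (leOfHom f), ← map_smul]
  exact hW.trans (map_zero _)

lemma exists_local_eq_smul_res (he : IsExtensionByZero e) (h : V ≤ U) (s : K.Sections V) {x : X}
    (hx : x ∈ V) : ∃ (c : k) (W : Opens X) (hW : W ≤ V), x ∈ W ∧
      K.res hW s = c • K.res (hW.trans h) e := by
  have := GrothendieckTopology.W.isLocallySurjective he
  obtain ⟨W, f, ⟨p, hp⟩, hxW⟩ := Presheaf.imageSieve_mem (Opens.grothendieckTopology X)
    (freePresheaf.homEquiv.symm e) s x hx
  obtain ⟨c, rfl⟩ := freePresheaf.exists_eq_smul_gen ((leOfHom f).trans h) p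
  exact ⟨c, W, leOfHom f, hxW, hp.symm.trans (app_smul_gen _ _ _)⟩

lemma exists_eq_smul_res (he : IsExtensionByZero e) (h : V ≤ U)
    (hV : IsPreconnected (V : Set X)) (s : K.Sections V) : ∃ c : k, s = c • K.res h e := by
  choose! c W hWV hxW hW using fun x hx => he.exists_local_eq_smul_res h s (x := x) hx
  have locally_constant : ∀ x ∈ V, ∀ y ∈ W x, c x = c y := fun x hx y hy => by
    have hyV := hWV x hx hy
    refine sub_eq_zero.1 (he.eq_zero_of_smul_res_eq_zero (V := W x ⊓ W y)
      ((inf_le_left.trans (hWV x hx)).trans h) ⟨y, hy, hxW y hyV⟩ ?_)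
    have hx' := congrArg (K.res (inf_le_left : W x ⊓ W y ≤ W x)) (hW x hx)
    have hy' := congrArg (K.res (inf_le_right : W x ⊓ W y ≤ W y)) (hW y hyV)
    rw [map_smul, res_res, res_res] at hx' hy'
    rw [sub_smul, ← hx', ← hy', sub_self]
  have constant : ∀ x ∈ V, ∀ y ∈ V, c x = c y := fun x hx y hy =>
    hV.induction₂ (fun x y => c x = c y)
      (fun x hx => mem_nhdsWithin_of_mem_nhds <|
        Filter.mem_of_superset ((W x).isOpen.mem_nhds (hxW x hx)) (locally_constant x hx))
      (fun _ _ _ _ _ _ => Eq.trans) (fun _ _ _ _ => Eq.symm) hx hy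
  rcases (V : Set X).eq_empty_or_nonempty with hempty | ⟨x, hx⟩
  · exact ⟨0, eq_of_res_eq fun y hy => ((Set.eq_empty_iff_forall_notMem.1 hempty) y hy).elim⟩
  · refine ⟨c x, eq_of_res_eq fun y hy => ⟨W y, hWV y hy, hxW y hy, ?_⟩⟩
    rw [map_smul, res_res, constant x hx y hy, hW y hy]

lemma smul_bijective (he : IsExtensionByZero e) (hU : IsConnected (U : Set X)) :
    Function.Bijective fun c : k => c • e := by
  refine ⟨(injective_iff_map_eq_zero (LinearMap.toSpanSingleton k _ e)).2 fun c hc =>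
    he.eq_zero_of_smul_res_eq_zero le_rfl hU.nonempty ?_, fun s => ?_⟩
  · rwa [res_self]
  · obtain ⟨c, hc⟩ := he.exists_eq_smul_res le_rfl hU.isPreconnected s
    exact ⟨c, (hc.trans (by rw [res_self])).symm⟩

/-- The additive group of endomorphisms of `j_! k_U`, for `U` connected. -/
def endAddEquiv (he : IsExtensionByZero e) (hU : IsConnected (U : Set X)) : (K ⟶ K) ≃+ k :=
  (AddEquiv.ofBijective (AddMonoidHom.mk' (fun φ : K ⟶ K => mapSections φ U e) fun _ _ => rfl)
    (he.mapSections_bijective K)).trans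
  (AddEquiv.ofBijective (LinearMap.toSpanSingleton k _ e).toAddMonoidHom
    (he.smul_bijective hU)).symm

variable {ι : Type*} [Finite ι] {ψ : (ι → ℝ) → X} {hψ : Topology.IsOpenEmbedding ψ}

lemma isBoxFlasque (he : IsExtensionByZero e) (hU : (U : Set X) = Set.range ψ) :
    K.IsBoxFlasque hψ := by
  intro a b c d _ h s
  have hle (a b) : box hψ a b ≤ U := box_le_iff.2 fun x _ => hU.ge (Set.mem_range_self x)
  obtain ⟨r, rfl⟩ := he.exists_eq_smul_res (hle a b) isPreconnected_box s
  exact ⟨r • K.res (hle c d) e, by rw [map_smul, res_res]⟩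

lemma exists_lift (he : IsExtensionByZero e) (hU : (U : Set X) = Set.range ψ)
    {S : ShortComplex (ModuleSheaf k X)} (hS : S.ShortExact) (hF : S.X₁.IsBoxFlasque hψ)
    (f : K ⟶ S.X₃) : ∃ g : K ⟶ S.X₂, g ≫ S.g = f := by
  obtain ⟨t, ht⟩ := hF.mapSections_surjective_range hS hU (mapSections f U e)
  obtain ⟨g, rfl⟩ := (he.mapSections_bijective S.X₂).2 t
  exact ⟨g, (he.mapSections_bijective S.X₃).1 ht⟩

end IsExtensionByZero

end ModuleSheaf

section DimensionShifting

open Abelian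

variable {C : Type*} [Category* C] [Abelian C] [HasExt.{w} C] [EnoughInjectives C] {K F : C}
  {P : ObjectProperty C}

lemma exists_comp_extClass_eq {n : ℕ} (e : Ext K F (n + 1)) :
    ∃ (I : InjectivePresentation F) (x : Ext K I.shortComplex.X₃ n),
      x.comp I.shortExact_shortComplex.extClass rfl = e :=
  let I : InjectivePresentation F := Classical.choice (EnoughInjectives.presentation F)
  have : Injective I.shortComplex.X₂ := I.injective
  ⟨I, Ext.covariant_sequence_exact₁ K I.shortExact_shortComplex e
    (Ext.eq_zero_of_injective _) rfl⟩

lemma ext_succ_eq_zero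
    (lift : ∀ S : ShortComplex C, S.ShortExact → P S.X₁ →
      ∀ f : K ⟶ S.X₃, ∃ g : K ⟶ S.X₂, g ≫ S.g = f)
    (quot : ∀ S : ShortComplex C, S.ShortExact → P S.X₁ → Injective S.X₂ → P S.X₃)
    (hF : P F) {n : ℕ} (e : Ext K F (n + 1)) : e = 0 := by
  induction n generalizing F with
  | zero =>
    obtain ⟨I, x, rfl⟩ := exists_comp_extClass_eq e
    obtain ⟨f, rfl⟩ := (Ext.mk₀_bijective _ _).2 x
    obtain ⟨g, rfl⟩ := lift _ I.shortExact_shortComplex hF f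
    rw [← Ext.mk₀_comp_mk₀, Ext.comp_assoc_of_second_deg_zero,
      I.shortExact_shortComplex.comp_extClass, Ext.comp_zero]
  | succ n ih =>
    obtain ⟨I, x, rfl⟩ := exists_comp_extClass_eq e
    rw [ih (quot _ I.shortExact_shortComplex hF I.injective) x, Ext.zero_comp]

end DimensionShifting

namespace ModuleSheaf.IsExtensionByZero

open Abelian

variable {k : Type u} [Ring k] {X : TopCat.{u}} [HasExt.{w} (ModuleSheaf k X)]
  {K : ModuleSheaf k X} {U : Opens X} {e : K.Sections U} {ι : Type*} [Finite ι]
  {ψ : (ι → ℝ) → X}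

lemma subsingleton_ext (he : IsExtensionByZero e) (hψ : Topology.IsOpenEmbedding ψ)
    (hU : (U : Set X) = Set.range ψ) {n : ℕ} (hn : n ≠ 0) : Subsingleton (Ext K K n) := by
  obtain ⟨n, rfl⟩ := Nat.exists_eq_succ_of_ne_zero hn
  refine subsingleton_of_forall_eq 0 fun e => ext_succ_eq_zero (P := IsBoxFlasque hψ)
    (fun S hS hF => he.exists_lift hU hS hF) (fun S hS hF _ => hF.of_shortExact hS)
    (he.isBoxFlasque hU) e

end ModuleSheaf.IsExtensionByZero

namespace ModuleSheaf

variable {k : Type u} [Ring k] {X : TopCat.{u}} {V : Opens X} {x : X}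

/-- The sheaf `i_* i^* F` for the inclusion `i` of the point `x`. -/
def stalkSkyscraper (F : ModuleSheaf k X) (x : X) : ModuleSheaf k X :=
  (skyscraperSheafFunctor x).obj (TopCat.Presheaf.stalk F.obj x)

/-- The unit `F ⟶ i_* i^* F` of the adjunction between stalks and skyscraper sheaves at `x`. -/
def skyscraperUnit (F : ModuleSheaf k X) (x : X) : F ⟶ F.stalkSkyscraper x :=
  (stalkSkyscraperSheafAdjunction (C := ModuleCat.{u} k) x).unit.app F

lemma mapSections_skyscraperUnit_of_notMem (F : ModuleSheaf k X) (hx : x ∉ V) (s : F.Sections V) :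
    mapSections (F.skyscraperUnit x) V s = 0 :=
  have hzero : (F.skyscraperUnit x).hom.app (op V) = 0 :=
    IsTerminal.hom_ext ((if_neg hx).symm.ndrec terminalIsTerminal) _ _
  congr($hzero s)

lemma exists_res_eq_zero_of_skyscraperUnit {F : ModuleSheaf k X} (hx : x ∈ V) {s : F.Sections V}
    (hs : mapSections (F.skyscraperUnit x) V s = 0) :
    ∃ (W : Opens X) (hW : W ≤ V), x ∈ W ∧ F.res hW s = 0 := by
  let adj := stalkSkyscraperSheafAdjunction (C := ModuleCat.{u} k) x
  let germ (G : ModuleSheaf k X) := TopCat.Presheaf.germ G.obj V x hx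
  have hstalk : (TopCat.Presheaf.stalkFunctor _ x).map (F.skyscraperUnit x).hom (germ F s) = 0 :=
    (TopCat.Presheaf.stalkFunctor_map_germ_apply _ _ _ _ _).trans
      ((congrArg (germ _) hs).trans (map_zero _))
  have hgerm : germ F s = germ F 0 := calc
    germ F s = adj.counit.app _ ((TopCat.Presheaf.stalkFunctor _ x).map
        (F.skyscraperUnit x).hom (germ F s)) :=
      congr($(adj.left_triangle_components F) (germ F s)).symm
    _ = 0 := (congrArg (adj.counit.app _).hom hstalk).trans (map_zero _)
    _ = germ F 0 := (map_zero _).symm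
  obtain ⟨W, hxW, i, j, hW⟩ := TopCat.Presheaf.germ_eq F.obj x hx hx s 0 hgerm
  exact ⟨W, leOfHom i, hxW, hW.trans (map_zero _)⟩

variable {K F : ModuleSheaf k X} {U U' : Opens X} {e : F.Sections U}

lemma IsExtensionByZero.of_local {e : K.Sections U}
    (inj : ∀ V (h : V ≤ U) (c : k), (V : Set X).Nonempty → c • K.res h e = 0 → c = 0)
    (surj : ∀ V (s : K.Sections V), ∀ y ∈ V, ∃ (W : Opens X) (hW : W ≤ V), y ∈ W ∧
      (K.res hW s = 0 ∨ ∃ (h : W ≤ U) (c : k), K.res hW s = c • K.res h e)) :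
    IsExtensionByZero e := by
  have : Presheaf.IsLocallyInjective (Opens.grothendieckTopology X)
      (freePresheaf.homEquiv.symm e) := ⟨fun {V} p q hpq y hy => by
    refine ⟨V.unop, 𝟙 _, congrArg _ (sub_eq_zero.1 ?_), hy⟩
    refine freePresheaf.eq_zero_of_app_eq_zero (freePresheaf.homEquiv.symm e) (fun h c hc => ?_)
      ((map_sub _ p q).trans (sub_eq_zero.2 hpq))
    rw [Equiv.apply_symm_apply] at hc
    exact inj V.unop h c ⟨y, hy⟩ hc⟩
  have : Presheaf.IsLocallySurjective (Opens.grothendieckTopology X)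
      (freePresheaf.homEquiv.symm e) := ⟨fun {V} s y hy => by
    obtain ⟨W, hW, hyW, hs | ⟨h, c, hs⟩⟩ := surj V s y hy
    · exact ⟨W, homOfLE hW, ⟨0, (map_zero _).trans hs.symm⟩, hyW⟩
    · exact ⟨W, homOfLE hW,
        ⟨c • freePresheaf.gen h, (IsExtensionByZero.app_smul_gen e h c).trans hs.symm⟩, hyW⟩⟩
  exact (Opens.grothendieckTopology X).W_of_isLocallyBijective _

lemma IsExtensionByZero.of_mono (he : IsExtensionByZero e) (i : K ⟶ F) [Mono i] (hU : U' ≤ U)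
    {e' : K.Sections U'} (he' : mapSections i U' e' = F.res hU e)
    (hK : ∀ V (s : K.Sections V), ∀ y ∈ V, y ∉ U' →
      ∃ (W : Opens X) (hW : W ≤ V), y ∈ W ∧ K.res hW s = 0) :
    IsExtensionByZero e' := by
  have map_smul_res {V : Opens X} (h : V ≤ U') (c : k) :
      mapSections i V (c • K.res h e') = c • F.res (h.trans hU) e := by
    rw [map_smul, mapSections_res, he', res_res]
  refine .of_local (fun V h c hV hc => ?_) (fun V s y hy => ?_)
  · refine he.eq_zero_of_smul_res_eq_zero (h.trans hU) hV ?_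
    rw [← map_smul_res h, hc, map_zero]
  · by_cases hyU : y ∈ U'
    · obtain ⟨c, W, hW, hyW, hs⟩ := he.exists_local_eq_smul_res (inf_le_right.trans hU)
        (mapSections i (V ⊓ U') (K.res inf_le_left s)) ⟨hy, hyU⟩
      refine ⟨W, hW.trans inf_le_left, hyW, Or.inr ⟨hW.trans inf_le_right, c, ?_⟩⟩
      apply mapSections_injective i W
      rw [map_smul_res, ← hs, ← mapSections_res, res_res]
    · obtain ⟨W, hW, hyW, hs⟩ := hK V s y hy hyU
      exact ⟨W, hW, hyW, Or.inl hs⟩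

variable (k X) in
/-- The constant sheaf with stalk `k`. -/
abbrev constant : ModuleSheaf k X :=
  (constantSheaf (Opens.grothendieckTopology X) (ModuleCat.{u} k)).obj (ModuleCat.of k k)

variable (k X) in
/-- The global section `1` of the constant sheaf. -/
def constantOne : (constant k X).Sections ⊤ :=
  (toSheafify (Opens.grothendieckTopology X)
    ((Functor.const _).obj (ModuleCat.of k k))).app (op ⊤) (1 : k)

lemma isExtensionByZero_constantOne : IsExtensionByZero (constantOne k X) := by
  let P : (Opens X)ᵒᵖ ⥤ ModuleCat.{u} k := (Functor.const _).obj (ModuleCat.of k k)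
  let α : freePresheaf k ⊤ ⟶ P := freePresheaf.homEquiv.symm (1 : k)
  have app_α {V : Opens X} (c : k) : α.app (op V) (c • freePresheaf.gen le_top) = c := by
    rw [map_smul, freePresheaf.app_gen, Equiv.apply_symm_apply]
    exact mul_one c
  have hα : IsIso α := by
    have : ∀ V, IsIso (α.app V) := fun V => by
      refine (ConcreteCategory.isIso_iff_bijective _).2
        ⟨(injective_iff_map_eq_zero (α.app V).hom).2 fun p hp => ?_, fun c => ⟨_, app_α c⟩⟩
      obtain ⟨c, rfl⟩ := freePresheaf.exists_eq_smul_gen le_top p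
      rw [(app_α c).symm.trans hp, zero_smul]
    exact NatIso.isIso_of_isIso_app α
  have hfac : freePresheaf.homEquiv.symm (constantOne k X) = α ≫ toSheafify _ P :=
    (freePresheaf.homEquiv_symm_comp _ _).symm
  rw [IsExtensionByZero, hfac]
  exact (MorphismProperty.cancel_left_of_respectsIso _ _ _).2
    (GrothendieckTopology.W_toSheafify _ _)

/-- The sheaf `K` of sections of the constant sheaf vanishing at `x`: the kernel of
`k_X ⟶ i_* i^* k_X`. -/
abbrev puncturedConstant (k : Type u) [Ring k] (x : X) : ModuleSheaf k X :=
  kernel ((constant k X).skyscraperUnit x)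

lemma exists_isExtensionByZero_puncturedConstant (hU : (U : Set X) = {x}ᶜ) :
    ∃ e : (puncturedConstant k x).Sections U, IsExtensionByZero e := by
  let η := (constant k X).skyscraperUnit x
  have hxU : x ∉ U := fun h => hU.le h rfl
  let S := ShortComplex.mk (kernel.ι η) η (kernel.condition η)
  have hS : S.Exact := ShortComplex.exact_of_f_is_kernel _ (kernelIsKernel η)
  have : Mono S.f := equalizer.ι_mono
  obtain ⟨e, he⟩ := exists_mapSections_eq_of_exact hS ((constant k X).res le_top (constantOne k X))
    (mapSections_skyscraperUnit_of_notMem _ hxU _)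
  refine ⟨e, isExtensionByZero_constantOne.of_mono (kernel.ι η) le_top he fun V s y hy hyU => ?_⟩
  obtain rfl : y = x := by_contra fun h => hyU (hU.ge h)
  obtain ⟨W, hW, hyW, hs⟩ := exists_res_eq_zero_of_skyscraperUnit hy
    (s := mapSections (kernel.ι η) V s) (by
      rw [← mapSections_comp, kernel.condition]
      rfl)
  refine ⟨W, hW, hyW, mapSections_injective (kernel.ι η) W ?_⟩
  rw [mapSections_res, hs, map_zero]

end ModuleSheaf

lemma exists_isOpenEmbedding_range_eq_compl_singleton {n : ℕ} {E : Type*} [NormedAddCommGroup E]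
    [InnerProductSpace ℝ E] [Fact (Module.finrank ℝ E = n + 1)] (v : Metric.sphere (0 : E) 1) :
    ∃ ψ : (Fin n → ℝ) → Metric.sphere (0 : E) 1,
      Topology.IsOpenEmbedding ψ ∧ Set.range ψ = {v}ᶜ := by
  have hψ : Topology.IsOpenEmbedding (stereographic' n v).symm :=
    (stereographic' n v).symm.isOpenEmbedding (stereographic'_target v)
  have hrange : Set.range (stereographic' n v).symm = {v}ᶜ := by
    rw [← Set.image_univ, ← stereographic'_target v,
      OpenPartialHomeomorph.symm_image_target_eq_source, stereographic'_source]
  let L := (EuclideanSpace.equiv (Fin n) ℝ).symm.toHomeomorph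
  exact ⟨_, hψ.comp L.isOpenEmbedding, (L.surjective.range_comp _).trans hrange⟩

namespace SU2

open Matrix

/-- The matrix with first row `z` that lies in `SU(2)` when `z` is a unit vector. -/
def ofFirstRow (z : EuclideanSpace ℂ (Fin 2)) : Matrix (Fin 2) (Fin 2) ℂ :=
  !![z 0, z 1; -star (z 1), star (z 0)]

/-- The first row of an element of `SU(2)`. -/
def firstRow (g : SU2) : EuclideanSpace ℂ (Fin 2) := !₂[g.1 0 0, g.1 0 1]

lemma star_ofFirstRow (z : EuclideanSpace ℂ (Fin 2)) :
    star (ofFirstRow z) = (ofFirstRow z).adjugate := by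
  ext i j
  fin_cases i <;> fin_cases j <;> simp [ofFirstRow, adjugate_fin_two, star_apply]

lemma det_ofFirstRow (z : EuclideanSpace ℂ (Fin 2)) : (ofFirstRow z).det = (‖z‖ : ℂ) ^ 2 := by
  rw [← Complex.ofReal_pow, EuclideanSpace.norm_sq_eq, Fin.sum_univ_two, ofFirstRow, det_fin_two_of]
  push_cast
  rw [← Complex.mul_conj', ← Complex.mul_conj', mul_neg, sub_neg_eq_add]
  rfl

lemma ofFirstRow_firstRow (g : SU2) : ofFirstRow (firstRow g) = g.1.1 := by
  have hstar : star g.1.1 = adjugate g.1.1 := by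
    refine left_inv_eq_right_inv (mem_unitaryGroup_iff'.1 g.1.2) ?_
    rw [mul_adjugate, show g.1.1.det = 1 from g.2, one_smul]
  rw [adjugate_fin_two] at hstar
  ext i j
  fin_cases i <;> fin_cases j
  · rfl
  · rfl
  · exact neg_eq_iff_eq_neg.2 congr($hstar 1 0)
  · exact congr($hstar 0 0)

lemma norm_firstRow (g : SU2) : ‖firstRow g‖ = 1 := by
  have hdet : (‖firstRow g‖ : ℂ) ^ 2 = 1 := by
    rw [← det_ofFirstRow, ofFirstRow_firstRow]
    exact g.2
  exact (pow_eq_one_iff_of_nonneg (norm_nonneg _) two_ne_zero).1 (by exact_mod_cast hdet)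

lemma det_ofFirstRow_of_norm_eq_one {z : EuclideanSpace ℂ (Fin 2)} (hz : ‖z‖ = 1) :
    (ofFirstRow z).det = 1 := by
  rw [det_ofFirstRow, hz, Complex.ofReal_one, one_pow]

lemma ofFirstRow_mem_unitaryGroup {z : EuclideanSpace ℂ (Fin 2)} (hz : ‖z‖ = 1) :
    ofFirstRow z ∈ unitaryGroup (Fin 2) ℂ := by
  rw [mem_unitaryGroup_iff, star_ofFirstRow, mul_adjugate, det_ofFirstRow_of_norm_eq_one hz,
    one_smul]

/-- `SU(2)` is homeomorphic to the unit sphere of `ℂ²`, an element being determined by its first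
row. -/
def homeomorphSphere : SU2 ≃ₜ Metric.sphere (0 : EuclideanSpace ℂ (Fin 2)) 1 where
  toFun g := ⟨firstRow g, mem_sphere_zero_iff_norm.2 (norm_firstRow g)⟩
  invFun z :=
    have hz := norm_eq_of_mem_sphere z
    ⟨⟨ofFirstRow z, ofFirstRow_mem_unitaryGroup hz⟩, det_ofFirstRow_of_norm_eq_one hz⟩
  left_inv g := Subtype.ext (Subtype.ext (ofFirstRow_firstRow g))
  right_inv z := Subtype.ext (by
    ext i
    fin_cases i <;> rfl)
  continuous_toFun := by
    have entry (i j) : Continuous fun g : SU2 => g.1 i j :=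
      (continuous_subtype_val.comp continuous_subtype_val).matrix_elem i j
    refine Continuous.subtype_mk ((PiLp.continuous_toLp 2 _).comp (continuous_pi fun j => ?_)) _
    fin_cases j
    · exact entry 0 0
    · exact entry 0 1
  continuous_invFun := by
    refine Continuous.subtype_mk (Continuous.subtype_mk (continuous_matrix fun i j => ?_) _) _
    have entry (i) : Continuous fun z : Metric.sphere (0 : EuclideanSpace ℂ (Fin 2)) 1 => z.1 i :=
      (PiLp.continuous_apply 2 _ i).comp continuous_subtype_val
    fin_cases i <;> fin_cases j
    · exact entry 0
    · exact entry 1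
    · exact (entry 1).star.neg
    · exact (entry 0).star

lemma exists_isOpenEmbedding_range_eq_compl_one : ∃ ψ : (Fin 3 → ℝ) → SU2,
    Topology.IsOpenEmbedding ψ ∧ Set.range ψ = {1}ᶜ := by
  have : Fact (Module.finrank ℝ (EuclideanSpace ℂ (Fin 2)) = 3 + 1) :=
    ⟨by rw [finrank_real_of_complex, finrank_euclideanSpace_fin]⟩
  obtain ⟨ψ, hψ, hrange⟩ :=
    exists_isOpenEmbedding_range_eq_compl_singleton (n := 3) (homeomorphSphere 1)
  refine ⟨homeomorphSphere.symm ∘ ψ, homeomorphSphere.symm.isOpenEmbedding.comp hψ, ?_⟩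
  rw [Set.range_comp, hrange, Set.image_compl_eq homeomorphSphere.symm.bijective,
    Set.image_singleton, Homeomorph.symm_apply_apply]

end SU2

open ModuleSheaf in
theorem ext_K_K_general {k : Type u} [Ring k] {X : TopCat.{u}} [HasExt.{w} (ModuleSheaf k X)]
    (x : X) {ι : Type*} [Finite ι] {ψ : (ι → ℝ) → X} (hψ : Topology.IsOpenEmbedding ψ)
    (hrange : Set.range ψ = {x}ᶜ) :
    Nonempty (Abelian.Ext (puncturedConstant k x) (puncturedConstant k x) 0 ≃+ k) ∧
    ∀ n : ℕ, n ≠ 0 →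
      Subsingleton (Abelian.Ext (puncturedConstant k x) (puncturedConstant k x) n) := by
  let U : Opens X := ⟨Set.range ψ, hψ.isOpen_range⟩
  have hU : IsConnected (U : Set X) := isConnected_range hψ.continuous
  obtain ⟨e, he⟩ := exists_isExtensionByZero_puncturedConstant (k := k) (U := U) hrange
  exact ⟨⟨Abelian.Ext.addEquiv₀.trans (he.endAddEquiv hU)⟩,
    fun n hn => he.subsingleton_ext hψ rfl hn⟩

/-- `Ext^0(K, K) ≅ ℚ` and `Ext^n(K, K) = 0` for all `n ≠ 0`. -/
theorem ext_K_K :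
    (Nonempty ((Abelian.Ext KK KK 0) ≃+ ℚ)) ∧
    (∀ n : ℕ, n ≠ 0 → Subsingleton (Abelian.Ext KK KK n)) := by
  obtain ⟨ψ, hψ, hrange⟩ := SU2.exists_isOpenEmbedding_range_eq_compl_one
  exact ext_K_K_general (X := GTop) (1 : SU2) hψ hrange

end
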